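/- (All Possible Configurations) Let n be a natural number and let R and L be subsets of Fin n. Then there exists a subspace W of F^n whose set of red indices is exactly R and whose set of lime indices is exactly L if and only if the sets L \ R and R \ L have the same cardinality and, for every i ∈ L \ R, the number of indices j > i with j ∈ R \ L is strictly greater than the number of indices j > i with j ∈ L \ R. -/

import Mathlib

/-!
Necessity is a dimension count. Vectors of `W` originating (or terminating) at distinct positions
are linearly independent (`card_le_finrank`), while restriction to the coordinates in `R` is
injective on `W`, because a nonzero vector is nonzero at its terminal position
(`finrank_le_card`); hence `#L = dim W = #R`. For `i ∈ L \ R`, the same two bounds applied to the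
subspace of vectors of `W` vanishing before `i` show that `L` has at most as many elements `≥ i`
as `R` has elements `> i`.

For sufficiency, let `f : L \ R → R \ L` be the order isomorphism. The counting condition forces
`i < f i` (`lt_orderIso`), and the subspace cut out by `x k = 0` for `k ∉ L ∪ R` and
`x (f i) = x i` for `i ∈ L \ R` has the required red and lime indices: it is spanned by the unit
vectors `e j`, `j ∈ L ∩ R`, and the vectors `e i + e (f i)`, `i ∈ L \ R`.
-/


variable {F : Type*} [Field F] {n : ℕ}

/-- A (nonzero) vector `x` terminates at position `j` if `x j ≠ 0` and all later entries vanish. -/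
def TerminatesAt (x : Fin n → F) (j : Fin n) : Prop :=
  x j ≠ 0 ∧ ∀ k, j < k → x k = 0

/-- A (nonzero) vector `x` originates at position `j` if `x j ≠ 0` and all earlier entries vanish. -/
def OriginatesAt (x : Fin n → F) (j : Fin n) : Prop :=
  x j ≠ 0 ∧ ∀ k, k < j → x k = 0

/-- `j` is a red index of `W` if some element of `W` terminates at `j`. -/
def IsRedIndex (W : Submodule F (Fin n → F)) (j : Fin n) : Prop :=
  ∃ x ∈ W, TerminatesAt x j

/-- `j` is a lime index of `W` if some element of `W` originates at `j`. -/
def IsLimeIndex (W : Submodule F (Fin n → F)) (j : Fin n) : Prop :=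
  ∃ x ∈ W, OriginatesAt x j

/-- Vectors with distinct terminal positions are linearly independent. The order on the index
type is arbitrary so that passing to the order dual gives the same fact for originating
positions. -/
theorem card_le_finrank {F ι : Type*} [Field F] [LinearOrder ι] [Fintype ι]
    (W : Submodule F (ι → F)) (S : Finset ι)
    (h : ∀ j ∈ S, ∃ x ∈ W, x j ≠ 0 ∧ ∀ k, j < k → x k = 0) :
    S.card ≤ Module.finrank F W := by
  classical
  have h' : ∀ j : S, ∃ x : W, (x : ι → F) j ≠ 0 ∧ ∀ k, (j : ι) < k → (x : ι → F) k = 0 := by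
    intro j
    obtain ⟨x, hx, hj⟩ := h j j.2
    exact ⟨⟨x, hx⟩, hj⟩
  choose v hv hv0 using h'
  have hli : LinearIndependent F v := by
    rw [Fintype.linearIndependent_iff]
    intro g hg
    by_contra! hne
    obtain ⟨i₀, hi₀⟩ := hne
    -- Evaluate the relation at the largest index with a nonzero coefficient.
    obtain ⟨m, hm, hmax⟩ := (Finset.univ.filter fun i => g i ≠ 0).exists_max_image id
      ⟨i₀, by simpa using hi₀⟩
    have hm' : g m ≠ 0 := by simpa using hm
    have h1 := congrArg (fun w : W => (w : ι → F) m) hg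
    simp only [Submodule.coe_sum, Submodule.coe_smul, Finset.sum_apply, Pi.smul_apply,
      smul_eq_mul, Submodule.coe_zero, Pi.zero_apply] at h1
    rw [Finset.sum_eq_single m] at h1
    · exact (mul_ne_zero hm' (hv m)) h1
    · intro b _ hb
      by_cases hgb : g b = 0
      · simp [hgb]
      · have hlt : b < m := lt_of_le_of_ne (hmax b (by simpa using hgb)) hb
        rw [hv0 b m hlt, mul_zero]
    · simp
  simpa using hli.fintype_card_le_finrank

theorem finrank_le_card {F ι : Type*} [Field F] [Fintype ι]
    (W : Submodule F (ι → F)) (S : Finset ι)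
    (h : ∀ x ∈ W, x ≠ 0 → ∃ j ∈ S, x j ≠ 0) :
    Module.finrank F W ≤ S.card := by
  have hinj : Function.Injective ((LinearMap.funLeft F F (Subtype.val : S → ι)).comp W.subtype) := by
    rw [← LinearMap.ker_eq_bot, LinearMap.ker_eq_bot']
    intro x hx
    by_contra hne
    obtain ⟨j, hj, hxj⟩ := h x x.2 (by simpa using hne)
    exact hxj (congrFun hx ⟨j, hj⟩)
  simpa using LinearMap.finrank_le_finrank_of_injective hinj

theorem exists_terminatesAt {F : Type*} [Field F] {n : ℕ} (x : Fin n → F) (hx : x ≠ 0) :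
    ∃ j, TerminatesAt x j := by
  classical
  obtain ⟨i, hi⟩ := Function.ne_iff.1 hx
  obtain ⟨m, hm, hmax⟩ := (Finset.univ.filter fun i => x i ≠ 0).exists_max_image id
    ⟨i, by simpa using hi⟩
  refine ⟨m, by simpa using hm, fun k hk => ?_⟩
  by_contra hne
  exact absurd (hmax k (by simpa using hne)) (not_le.2 hk)

theorem exists_originatesAt {F : Type*} [Field F] {n : ℕ} (x : Fin n → F) (hx : x ≠ 0) :
    ∃ j, OriginatesAt x j := by
  classical
  obtain ⟨i, hi⟩ := Function.ne_iff.1 hx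
  obtain ⟨m, hm, hmin⟩ := (Finset.univ.filter fun i => x i ≠ 0).exists_min_image id
    ⟨i, by simpa using hi⟩
  refine ⟨m, by simpa using hm, fun k hk => ?_⟩
  by_contra hne
  exact absurd (hmin k (by simpa using hne)) (not_le.2 hk)

theorem card_filter_sdiff_lt {α : Type*} [DecidableEq α] (A B : Finset α) (p : α → Prop)
    [DecidablePred p] :
    ((A \ B).filter p).card < ((B \ A).filter p).card ↔
      (A.filter p).card < (B.filter p).card := by
  have e : ∀ C D : Finset α, (C \ D).filter p = C.filter p \ D.filter p := by
    intro C D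
    ext
    simp only [Finset.mem_filter, Finset.mem_sdiff]
    tauto
  rw [e, e]
  have h1 := Finset.card_sdiff_add_card_inter (A.filter p) (B.filter p)
  have h2 := Finset.card_sdiff_add_card_inter (B.filter p) (A.filter p)
  rw [Finset.inter_comm] at h2
  omega

/-- If `f a ≤ a`, then every element of `B` beyond `a` is the image of an element of `A` beyond
`a`, contradicting the count. -/
theorem lt_orderIso {α : Type*} [LinearOrder α] {A B : Finset α} (f : A ≃o B)
    (h : ∀ i ∈ A, (A.filter (fun j => i < j)).card < (B.filter (fun j => i < j)).card) (a : A) :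
    (a : α) < f a := by
  by_contra! hle
  refine absurd (h a a.2) (not_lt.2 ?_)
  refine Finset.card_le_card_of_injOn
    (fun b => if hb : b ∈ B then ((f.symm ⟨b, hb⟩ : A) : α) else b) ?_ ?_
  · intro b hb
    have hb' := Finset.mem_filter.1 (Finset.mem_coe.1 hb)
    simp only [hb'.1, dif_pos, Finset.coe_filter, Set.mem_ofPred_eq]
    refine ⟨(f.symm ⟨b, hb'.1⟩).2, ?_⟩
    have : a < f.symm ⟨b, hb'.1⟩ := by
      rw [OrderIso.lt_symm_apply]
      exact Subtype.coe_lt_coe.1 (lt_of_le_of_lt hle hb'.2)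
    exact this
  · intro b hb c hc hbc
    have hb' := Finset.mem_filter.1 (Finset.mem_coe.1 hb)
    have hc' := Finset.mem_filter.1 (Finset.mem_coe.1 hc)
    simp only [hb'.1, hc'.1, dif_pos] at hbc
    simpa using f.symm.injective (Subtype.ext hbc)

/-- The vectors supported on `L ∪ R` whose coordinates at `i` and `f i` agree for all
`i ∈ L \ R`. -/
def matchedSubspace (F : Type*) [Field F] {n : ℕ} (R L : Finset (Fin n))
    (f : ↥(L \ R) ≃o ↥(R \ L)) : Submodule F (Fin n → F) where
  carrier := {x | (∀ k, k ∉ L → k ∉ R → x k = 0) ∧ ∀ i, x (f i) = x i}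
  add_mem' := by
    rintro x y ⟨hx, hx'⟩ ⟨hy, hy'⟩
    exact ⟨fun k h1 h2 => by simp [hx k h1 h2, hy k h1 h2], fun i => by simp [hx', hy']⟩
  zero_mem' := ⟨fun _ _ _ => rfl, fun _ => rfl⟩
  smul_mem' := by
    rintro c x ⟨hx, hx'⟩
    exact ⟨fun k h1 h2 => by simp [hx k h1 h2], fun i => by simp [hx']⟩

theorem single_mem_matchedSubspace {F : Type*} [Field F] {n : ℕ} {R L : Finset (Fin n)}
    (f : ↥(L \ R) ≃o ↥(R \ L)) {j : Fin n} (hR : j ∈ R) (hL : j ∈ L) :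
    Pi.single j (1 : F) ∈ matchedSubspace F R L f := by
  refine ⟨fun k h1 _ => ?_, fun i => ?_⟩
  · exact Pi.single_eq_of_ne (fun h : k = j => h1 (h ▸ hL)) _
  · have h1 := Finset.mem_sdiff.1 i.2
    have h2 := Finset.mem_sdiff.1 (f i).2
    rw [Pi.single_eq_of_ne (fun h : (f i : Fin n) = j => h2.2 (h ▸ hL)),
      Pi.single_eq_of_ne (fun h : (i : Fin n) = j => h1.2 (h ▸ hR))]

theorem pair_mem_matchedSubspace {F : Type*} [Field F] {n : ℕ} {R L : Finset (Fin n)}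
    (f : ↥(L \ R) ≃o ↥(R \ L)) (a : ↥(L \ R)) :
    (fun k : Fin n => if k = a ∨ k = f a then (1 : F) else 0) ∈ matchedSubspace F R L f := by
  have ha := Finset.mem_sdiff.1 a.2
  have hfa := Finset.mem_sdiff.1 (f a).2
  refine ⟨fun k h1 h2 => ?_, fun i => ?_⟩
  · refine if_neg ?_
    rintro (rfl | rfl)
    · exact h1 ha.1
    · exact h2 hfa.1
  · have hi := Finset.mem_sdiff.1 i.2
    have hfi := Finset.mem_sdiff.1 (f i).2
    have n1 : (f i : Fin n) ≠ a := fun h => hfi.2 (h ▸ ha.1)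
    have n2 : (i : Fin n) ≠ f a := fun h => hfa.2 (h ▸ hi.1)
    have e : (f i : Fin n) = f a ↔ (i : Fin n) = a := by
      rw [← Subtype.ext_iff, f.injective.eq_iff, Subtype.ext_iff]
    simp only [n1, n2, e, false_or, or_false]

/-- All Possible Configurations: `R` and `L` arise as the sets of red and lime indices of a
subspace of `F^n` iff `L \ R` and `R \ L` have the same cardinality and to the right of each
element of `L \ R` there are strictly more elements of `R \ L` than of `L \ R`. -/
theorem all_possible_configurations (F : Type*) [Field F] (n : ℕ)
    (R L : Finset (Fin n)) :
    (∃ W : Submodule F (Fin n → F),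
      (∀ j, IsRedIndex W j ↔ j ∈ R) ∧ (∀ j, IsLimeIndex W j ↔ j ∈ L)) ↔
    ((L \ R).card = (R \ L).card ∧
      ∀ i ∈ L \ R,
        ((L \ R).filter (fun j => i < j)).card <
          ((R \ L).filter (fun j => i < j)).card) := by
  constructor
  · rintro ⟨W, hR, hL⟩
    constructor
    · have h1 : R.card ≤ Module.finrank F W := card_le_finrank W R fun j hj => (hR j).2 hj
      have h2 : L.card ≤ Module.finrank F W :=
        card_le_finrank (ι := (Fin n)ᵒᵈ) W L fun j hj => (hL j).2 hj
      have h3 : Module.finrank F W ≤ R.card := finrank_le_card W R fun x hx hx0 => by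
        obtain ⟨j, hj⟩ := exists_terminatesAt x hx0
        exact ⟨j, (hR j).1 ⟨x, hx, hj⟩, hj.1⟩
      have h4 : Module.finrank F W ≤ L.card := finrank_le_card W L fun x hx hx0 => by
        obtain ⟨j, hj⟩ := exists_originatesAt x hx0
        exact ⟨j, (hL j).1 ⟨x, hx, hj⟩, hj.1⟩
      exact Finset.card_sdiff_comm (by omega)
    · intro i hi
      obtain ⟨hiL, hiR⟩ := Finset.mem_sdiff.1 hi
      rw [card_filter_sdiff_lt]
      -- The vectors of `W` vanishing before `i`.
      let V : Submodule F (Fin n → F) :=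
        W ⊓ ⨅ k : {k // k < i}, LinearMap.ker (LinearMap.proj (R := F) (φ := fun _ => F) k.1)
      have hV : ∀ x, x ∈ V ↔ x ∈ W ∧ ∀ k, k < i → x k = 0 := by
        intro x
        simp [V, Submodule.mem_iInf]
      have h1 : (L.filter (fun j => i ≤ j)).card ≤ Module.finrank F V := by
        refine card_le_finrank (ι := (Fin n)ᵒᵈ) V (L.filter (fun j => i ≤ j)) fun j hj => ?_
        obtain ⟨hjL, hij⟩ := Finset.mem_filter.1 hj
        obtain ⟨x, hx, hxj⟩ := (hL j).2 hjL
        exact ⟨x, (hV x).2 ⟨hx, fun k hk => hxj.2 k (lt_of_lt_of_le hk hij)⟩, hxj⟩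
      have h2 : Module.finrank F V ≤ (R.filter (fun j => i < j)).card := by
        refine finrank_le_card V _ fun x hx hx0 => ?_
        obtain ⟨hxW, hxi⟩ := (hV x).1 hx
        obtain ⟨j, hj⟩ := exists_terminatesAt x hx0
        have hjR : j ∈ R := (hR j).1 ⟨x, hxW, hj⟩
        have hij : i ≤ j := not_lt.1 fun h => hj.1 (hxi j h)
        have hne : i ≠ j := fun h => hiR (h ▸ hjR)
        exact ⟨j, Finset.mem_filter.2 ⟨hjR, lt_of_le_of_ne hij hne⟩, hj.1⟩
      refine lt_of_lt_of_le (Finset.card_lt_card ?_) (h1.trans h2)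
      refine Finset.ssubset_iff_of_subset ?_ |>.2 ⟨i, by simp [hiL], by simp⟩
      exact Finset.monotone_filter_right _ fun j _ hj => le_of_lt hj
  · rintro ⟨hcard, hlt⟩
    let f : ↥(L \ R) ≃o ↥(R \ L) :=
      ((L \ R).orderIsoOfFin hcard).symm.trans ((R \ L).orderIsoOfFin rfl)
    have hf := lt_orderIso f hlt
    refine ⟨matchedSubspace F R L f, fun j => ⟨?_, fun hj => ?_⟩, fun j => ⟨?_, fun hj => ?_⟩⟩
    · rintro ⟨x, ⟨hx, hx'⟩, hxj, hxk⟩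
      by_contra hjR
      by_cases hjL : j ∈ L
      · have := hx' ⟨j, Finset.mem_sdiff.2 ⟨hjL, hjR⟩⟩
        rw [hxk _ (hf ⟨j, Finset.mem_sdiff.2 ⟨hjL, hjR⟩⟩)] at this
        exact hxj this.symm
      · exact hxj (hx j hjL hjR)
    · by_cases hjL : j ∈ L
      · exact ⟨_, single_mem_matchedSubspace f hj hjL, by simp,
          fun k hk => Pi.single_eq_of_ne hk.ne' _⟩
      · obtain ⟨a, ha⟩ := f.surjective ⟨j, Finset.mem_sdiff.2 ⟨hj, hjL⟩⟩
        have haj : (f a : Fin n) = j := by rw [ha]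
        have hlt' := hf a
        refine ⟨_, pair_mem_matchedSubspace f a, by simp [haj], fun k hk => if_neg ?_⟩
        rw [haj] at hlt' ⊢
        rintro (h | h)
        · exact absurd (h ▸ hk) (not_lt.2 hlt'.le)
        · exact hk.ne' h
    · rintro ⟨x, ⟨hx, hx'⟩, hxj, hxk⟩
      by_contra hjL
      by_cases hjR : j ∈ R
      · obtain ⟨a, ha⟩ := f.surjective ⟨j, Finset.mem_sdiff.2 ⟨hjR, hjL⟩⟩
        have haj : (f a : Fin n) = j := by rw [ha]
        have := hx' a
        rw [haj, hxk a (haj ▸ hf a)] at this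
        exact hxj this
      · exact hxj (hx j hjL hjR)
    · by_cases hjR : j ∈ R
      · exact ⟨_, single_mem_matchedSubspace f hjR hj, by simp,
          fun k hk => Pi.single_eq_of_ne hk.ne _⟩
      · have hlt' := hf ⟨j, Finset.mem_sdiff.2 ⟨hj, hjR⟩⟩
        refine ⟨_, pair_mem_matchedSubspace f ⟨j, Finset.mem_sdiff.2 ⟨hj, hjR⟩⟩, by simp,
          fun k hk => if_neg ?_⟩
        rintro (h | h)
        · exact hk.ne h
        · exact (hk.trans hlt').ne h
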